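/- Let θ = (θ_d)_{d ∈ ℕ^n×ℕ} be nonnegative reals with Σ_d θ_d · max(1,γ)^{d_y + 1} < ∞. For each r ≥ max_j d_j, the semidefinite program τ'_r := inf { Σ_{d ∈ ℕ^{n+1}_{2r}} θ_d φ_d : φ feasible at order r } attains its infimum at some feasible φ^r, and τ'_r ≤ Σ_{d ∈ ℕ^n×ℕ} θ_d μ_d. -/

import Mathlib

open MeasureTheory Set

noncomputable section

/-- The finite set `ℕ^{n+1}_r` of multi-indices `d ∈ ℕ^n × ℕ` with `|d| ≤ r`. -/
def idx (n r : ℕ) : Finset ((Fin n → ℕ) × ℕ) :=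
  Finset.filter (fun d => (∑ i, d.1 i) + d.2 ≤ r)
    ((Fintype.piFinset fun _ : Fin n => Finset.range (r + 1)) ×ˢ Finset.range (r + 1))

/-- Multi-indices `e ∈ ℕ^n` with `|e| ≤ r`. -/
def xIdx (n r : ℕ) : Finset (Fin n → ℕ) :=
  Finset.filter (fun e => ∑ i, e i ≤ r) (Fintype.piFinset fun _ : Fin n => Finset.range (r + 1))

/-- Evaluation of a polynomial in `x` of degree `≤ r` given by its coefficients `c`. -/
def polyEval (n r : ℕ) (c : (Fin n → ℕ) → ℝ) (x : Fin n → ℝ) : ℝ :=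
  ∑ e ∈ xIdx n r, c e * ∏ i, x i ^ e i

/-- The moment matrix `M_r(φ)`, with rows and columns indexed by `ℕ^{n+1}_r`. -/
def momMat (n r : ℕ) (φ : ((Fin n → ℕ) × ℕ) → ℝ) : Matrix (idx n r) (idx n r) ℝ :=
  fun a b => φ (fun i => a.1.1 i + b.1.1 i, a.1.2 + b.1.2)

/-- The localizing matrix `M_{r−t}(g φ)` of a polynomial `g` in `x` with coefficients `c`
and degree `≤ 2t`. -/
def locMatX (n : ℕ) (c : (Fin n → ℕ) → ℝ) (t r : ℕ) (φ : ((Fin n → ℕ) × ℕ) → ℝ) :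
    Matrix (idx n (r - t)) (idx n (r - t)) ℝ :=
  fun a b => ∑ e ∈ xIdx n (2 * t),
    c e * φ (fun i => e i + a.1.1 i + b.1.1 i, a.1.2 + b.1.2)

/-- The localizing matrix `M_{r−1}(g_{m+1} φ)` of the polynomial `g_{m+1}(x,y) = y(γ−y)`. -/
def locMatY (n : ℕ) (γ : ℝ) (r : ℕ) (φ : ((Fin n → ℕ) × ℕ) → ℝ) :
    Matrix (idx n (r - 1)) (idx n (r - 1)) ℝ :=
  fun a b => γ * φ (fun i => a.1.1 i + b.1.1 i, a.1.2 + b.1.2 + 1)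
    - φ (fun i => a.1.1 i + b.1.1 i, a.1.2 + b.1.2 + 2)

/-- Feasibility of a pseudo-moment sequence `φ` at relaxation order `r`:
`M_r(φ) ⪰ 0`, `M_{r−d_j}(g_j φ) ⪰ 0` for `j = 1,…,m+1`, and `φ_d = μ_d` for all
`d ∈ D = {d : d_y ≤ 1}` with `|d| ≤ 2r`. -/
def Feasible (n m : ℕ) (γ : ℝ) (g : Fin m → (Fin n → ℕ) → ℝ) (t : Fin m → ℕ)
    (μmom : ((Fin n → ℕ) × ℕ) → ℝ) (r : ℕ) (φ : ((Fin n → ℕ) × ℕ) → ℝ) : Prop :=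
  (momMat n r φ).PosSemidef ∧
  (∀ j, (locMatX n (g j) (t j) r φ).PosSemidef) ∧
  (locMatY n γ r φ).PosSemidef ∧
  ∀ d : (Fin n → ℕ) × ℕ, d.2 ≤ 1 → (∑ i, d.1 i) + d.2 ≤ 2 * r → φ d = μmom d

/-!
The feasible set need not be bounded a priori, but the fixed moments control it: positivity of
`M_r(φ)` and of the localizing matrix of `y(γ − y)` give `φ_{2a+2e_y} ≤ γ² φ_{2a}`, so every
diagonal entry of `M_r(φ)` is at most `γ^{2a_y} μ_{(2a_x,0)}`, and a positive semidefinite matrix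
is controlled by its diagonal. Up to the irrelevant entries of degree `> 2r` the feasible set is
therefore compact, and the linear objective attains its minimum. The true moment sequence is
feasible, being an average of the moment sequences of Dirac masses, and its truncated objective is
at most the full series.
-/

section PosSemidef

lemma isClosed_setOf_posSemidef {ι R : Type*} [Ring R] [PartialOrder R] [StarRing R]
    [TopologicalSpace R] [IsTopologicalSemiring R] [ContinuousStar R] [OrderClosedTopology R] :
    IsClosed {M : Matrix ι ι R | M.PosSemidef} := by
  simp only [Matrix.PosSemidef, Matrix.IsHermitian, ofPred_and, ofPred_forall]
  refine (isClosed_eq continuous_id.matrix_conjTranspose continuous_id).inter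
    (isClosed_iInter fun v => isClosed_le continuous_const ?_)
  simp only [Finsupp.sum]
  fun_prop

lemma posSemidef_integral {ι Ω : Type*} [MeasurableSpace Ω] {ν : Measure Ω}
    {A : Ω → Matrix ι ι ℝ} (hint : ∀ i j, Integrable (fun ω => A ω i j) ν)
    (hA : ∀ᵐ ω ∂ν, (A ω).PosSemidef) :
    (Matrix.of fun i j => ∫ ω, A ω i j ∂ν).PosSemidef := by
  refine ⟨Matrix.IsHermitian.ext fun i j => ?_, fun v => ?_⟩
  · refine integral_congr_ae ?_
    filter_upwards [hA] with ω hω using hω.isHermitian.apply i j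
  · have hterm (i j : ι) : Integrable (fun ω => star (v i) * A ω i j * v j) ν :=
      ((hint i j).const_mul _).mul_const _
    have hsum : (v.sum fun i vi => v.sum fun j vj =>
        star vi * (Matrix.of fun i j => ∫ ω, A ω i j ∂ν) i j * vj) =
        ∫ ω, (v.sum fun i vi => v.sum fun j vj => star vi * A ω i j * vj) ∂ν := by
      simp only [Finsupp.sum, Matrix.of_apply]
      rw [integral_finsetSum _ fun i _ => integrable_finsetSum _ fun j _ => hterm i j]
      refine Finset.sum_congr rfl fun i _ => ?_
      rw [integral_finsetSum _ fun j _ => hterm i j]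
      simp only [integral_const_mul, integral_mul_const]
    rw [hsum]
    refine integral_nonneg_of_ae ?_
    filter_upwards [hA] with ω hω using hω.2 v

lemma quadratic_nonneg_of_posSemidef {ι : Type*} {M : Matrix ι ι ℝ} (hM : M.PosSemidef)
    (i j : ι) (s u : ℝ) : 0 ≤ s ^ 2 * M i i + 2 * s * u * M i j + u ^ 2 * M j j := by
  have hsymm : M j i = M i j := by simpa using hM.isHermitian.apply i j
  have h := (hM.submatrix ![i, j]).dotProduct_mulVec_nonneg ![s, u]
  simp only [dotProduct, Matrix.mulVec, Fin.sum_univ_two, Pi.star_apply, star_trivial,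
    Matrix.submatrix_apply, Matrix.cons_val_zero, Matrix.cons_val_one, hsymm] at h
  linarith

lemma abs_apply_le_of_posSemidef {ι : Type*} {M : Matrix ι ι ℝ} (hM : M.PosSemidef) (i j : ι) :
    |M i j| ≤ (M i i + M j j) / 2 := by
  have hadd := quadratic_nonneg_of_posSemidef hM i j 1 1
  have hsub := quadratic_nonneg_of_posSemidef hM i j 1 (-1)
  rw [abs_le]
  constructor <;> linarith

end PosSemidef

section JointIndex

/-- Multi-indices `d = (d_x, d_y) ∈ ℕ^n × ℕ`, the exponents of the monomials `x^{d_x} y^{d_y}`. -/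
abbrev JointIndex (n : ℕ) : Type := (Fin n → ℕ) × ℕ

variable {n : ℕ}

/-- The total degree `|d|` of a multi-index `d ∈ ℕ^n × ℕ`. -/
def totalDegree (d : JointIndex n) : ℕ := (∑ i, d.1 i) + d.2

@[simp]
lemma totalDegree_add (a b : JointIndex n) :
    totalDegree (a + b) = totalDegree a + totalDegree b := by
  simp only [totalDegree, Prod.fst_add, Prod.snd_add, Pi.add_apply, Finset.sum_add_distrib]
  ring

lemma mem_idx {r : ℕ} {d : JointIndex n} : d ∈ idx n r ↔ totalDegree d ≤ r := by
  simp only [idx, totalDegree, Finset.mem_filter, Finset.mem_product, Fintype.mem_piFinset,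
    Finset.mem_range, and_iff_right_iff_imp]
  intro hd
  refine ⟨fun i => ?_, by omega⟩
  have := Finset.single_le_sum (f := d.1) (fun _ _ => Nat.zero_le _) (Finset.mem_univ i)
  omega

lemma exists_le_sum_eq {ι : Type*} [Fintype ι] (d : ι → ℕ) {k : ℕ} (hk : k ≤ ∑ i, d i) :
    ∃ a ≤ d, ∑ i, a i = k := by
  obtain ⟨a, had, rfl⟩ := Finsupp.exists_le_degree_eq (Finsupp.equivFunOnFinite.symm d) k
    (by simpa [Finsupp.degree_eq_sum] using hk)
  exact ⟨a, had, (Finsupp.degree_eq_sum a).symm⟩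

lemma exists_add_eq_totalDegree_eq (d : JointIndex n) {k : ℕ} (hk : k ≤ totalDegree d) :
    ∃ a b : JointIndex n, a + b = d ∧ totalDegree a = k := by
  obtain ⟨a, had, ha⟩ := exists_le_sum_eq d.1 (min_le_right k (∑ i, d.1 i))
  have hle : ((a, k - ∑ i, a i) : JointIndex n) ≤ d :=
    ⟨had, by simp only [totalDegree] at hk; dsimp only; omega⟩
  refine ⟨_, d - _, add_tsub_cancel_of_le hle, ?_⟩
  simp only [totalDegree]
  omega

lemma exists_add_eq_mem_idx {r : ℕ} {d : JointIndex n} (hd : d ∈ idx n (2 * r)) :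
    ∃ a ∈ idx n r, ∃ b ∈ idx n r, a + b = d := by
  obtain ⟨a, b, rfl, ha⟩ := exists_add_eq_totalDegree_eq d (min_le_right r _)
  simp only [mem_idx, totalDegree_add] at hd ha ⊢
  exact ⟨a, by omega, b, by omega, rfl⟩

end JointIndex

section LocalizingMatrix

variable {n : ℕ}

/-- The localizing matrix `(∑_s q_s φ_{s+a+b})_{a,b}`, `|a|, |b| ≤ k`, of a polynomial `q` in
`(x, y)`, given as the finitely supported family of its coefficients. It contains the moment matrix
and the two kinds of localizing matrices of the relaxation as special cases. -/
def localizingMatrix (q : JointIndex n →₀ ℝ) (k : ℕ) (φ : JointIndex n → ℝ) :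
    Matrix (idx n k) (idx n k) ℝ :=
  fun a b => Finsupp.linearCombination ℝ (fun s => φ (s + a + b)) q

/-- The coefficient family in `(x, y)` of a polynomial in `x` of degree `≤ N` with coefficients
`c`; as in `polyEval`, coefficients of higher degree are ignored. -/
def liftPoly (N : ℕ) (c : (Fin n → ℕ) → ℝ) : JointIndex n →₀ ℝ :=
  ∑ e ∈ xIdx n N, Finsupp.single (e, 0) (c e)

/-- The coefficient family of `y(γ − y)`, the polynomial describing `Y = [0,γ]`. -/
def rangePoly (n : ℕ) (γ : ℝ) : JointIndex n →₀ ℝ :=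
  Finsupp.single (0, 1) γ - Finsupp.single (0, 2) 1

lemma momMat_eq_localizingMatrix (r : ℕ) (φ : JointIndex n → ℝ) :
    momMat n r φ = localizingMatrix (Finsupp.single 0 1) r φ := by
  ext a b
  simp only [localizingMatrix, Finsupp.linearCombination_single, zero_add, one_smul]
  rfl

lemma locMatX_eq_localizingMatrix (c : (Fin n → ℕ) → ℝ) (t r : ℕ) (φ : JointIndex n → ℝ) :
    locMatX n c t r φ = localizingMatrix (liftPoly (2 * t) c) (r - t) φ := by
  ext a b
  simp only [localizingMatrix, liftPoly, map_sum, Finsupp.linearCombination_single, locMatX,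
    smul_eq_mul]
  refine Finset.sum_congr rfl fun e _ => congrArg (fun d => c e * φ d) (Prod.ext rfl ?_)
  simp only [Prod.snd_add, zero_add]

lemma locMatY_eq_localizingMatrix (γ : ℝ) (r : ℕ) (φ : JointIndex n → ℝ) :
    locMatY n γ r φ = localizingMatrix (rangePoly n γ) (r - 1) φ := by
  have hindex (a b : JointIndex n) (j : ℕ) : (fun i => a.1 i + b.1 i, a.2 + b.2 + j) =
      ((0, j) + a + b : JointIndex n) := by
    refine Prod.ext ?_ ?_
    · simp only [Prod.fst_add, zero_add, Pi.add_def]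
    · simp only [Prod.snd_add]
      omega
  ext a b
  simp only [localizingMatrix, rangePoly, map_sub, Finsupp.linearCombination_single, locMatY,
    smul_eq_mul, one_mul, hindex]

lemma continuous_localizingMatrix (q : JointIndex n →₀ ℝ) (k : ℕ) :
    Continuous (localizingMatrix q k) := by
  refine continuous_matrix fun a b => ?_
  simp only [localizingMatrix, Finsupp.linearCombination_apply, Finsupp.sum]
  fun_prop

lemma localizingMatrix_congr {q : JointIndex n →₀ ℝ} {s k N : ℕ} (hN : s + 2 * k ≤ N)
    (hq : q ∈ Finsupp.supported ℝ ℝ {d | totalDegree d ≤ s}) {φ ψ : JointIndex n → ℝ}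
    (hφψ : ∀ d ∈ idx n N, φ d = ψ d) : localizingMatrix q k φ = localizingMatrix q k ψ := by
  ext a b
  simp only [localizingMatrix, Finsupp.linearCombination_apply]
  refine Finsupp.sum_congr fun d hd => ?_
  have hd : totalDegree d ≤ s := hq hd
  have ha := mem_idx.1 a.2
  have hb := mem_idx.1 b.2
  rw [hφψ _ (mem_idx.2 (by simp only [totalDegree_add]; omega))]

lemma single_zero_one_mem_supported :
    Finsupp.single 0 1 ∈ Finsupp.supported ℝ ℝ {d : JointIndex n | totalDegree d ≤ 0} :=
  Finsupp.single_mem_supported ℝ _ (by simp [totalDegree])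

lemma liftPoly_mem_supported (N : ℕ) (c : (Fin n → ℕ) → ℝ) :
    liftPoly N c ∈ Finsupp.supported ℝ ℝ {d | totalDegree d ≤ N} :=
  Submodule.sum_mem _ fun _ he => Finsupp.single_mem_supported ℝ _ (Finset.mem_filter.1 he).2

lemma rangePoly_mem_supported (γ : ℝ) :
    rangePoly n γ ∈ Finsupp.supported ℝ ℝ {d | totalDegree d ≤ 2} :=
  Submodule.sub_mem _ (Finsupp.single_mem_supported ℝ _ (by simp [totalDegree]))
    (Finsupp.single_mem_supported ℝ _ (by simp [totalDegree]))

end LocalizingMatrix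

section Moments

variable {n : ℕ}

/-- The value `x^{d_x} y^{d_y}` at `z = (x, y)` of the monomial with exponent `d`. -/
def monomialEval (d : JointIndex n) (z : (Fin n → ℝ) × ℝ) : ℝ := (∏ i, z.1 i ^ d.1 i) * z.2 ^ d.2

/-- The moment sequence `d ↦ ∫ x^{d_x} y^{d_y} dν` of a measure on `ℝ^n × ℝ`. -/
def jointMoment (ν : Measure ((Fin n → ℝ) × ℝ)) (d : JointIndex n) : ℝ := ∫ z, monomialEval d z ∂ν

/-- The value at `z = (x, y)` of the polynomial with coefficient family `q`. -/
def jointEval (q : JointIndex n →₀ ℝ) (z : (Fin n → ℝ) × ℝ) : ℝ :=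
  Finsupp.linearCombination ℝ (fun d => monomialEval d z) q

lemma monomialEval_add (a b : JointIndex n) (z : (Fin n → ℝ) × ℝ) :
    monomialEval (a + b) z = monomialEval a z * monomialEval b z := by
  simp only [monomialEval, Prod.fst_add, Prod.snd_add, Pi.add_apply, pow_add,
    Finset.prod_mul_distrib]
  ring

@[fun_prop]
lemma measurable_monomialEval (d : JointIndex n) : Measurable (monomialEval d) := by
  unfold monomialEval
  fun_prop

lemma jointEval_single_zero_one (z : (Fin n → ℝ) × ℝ) : jointEval (Finsupp.single 0 1) z = 1 := by
  simp [jointEval, monomialEval]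

lemma jointEval_liftPoly (N : ℕ) (c : (Fin n → ℕ) → ℝ) (z : (Fin n → ℝ) × ℝ) :
    jointEval (liftPoly N c) z = polyEval n N c z.1 := by
  simp [jointEval, liftPoly, polyEval, monomialEval]

lemma jointEval_rangePoly (γ : ℝ) (z : (Fin n → ℝ) × ℝ) :
    jointEval (rangePoly n γ) z = z.2 * (γ - z.2) := by
  simp only [jointEval, rangePoly, map_sub, Finsupp.linearCombination_single, monomialEval,
    Pi.zero_apply, pow_zero, Finset.prod_const_one, smul_eq_mul]
  ring

lemma localizingMatrix_monomialEval (q : JointIndex n →₀ ℝ) (k : ℕ) (z : (Fin n → ℝ) × ℝ) :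
    localizingMatrix q k (fun d => monomialEval d z) = jointEval q z •
      Matrix.vecMulVec (fun a : idx n k => monomialEval a.1 z)
        (star fun a : idx n k => monomialEval a.1 z) := by
  ext a b
  simp only [localizingMatrix, jointEval, monomialEval_add, Finsupp.linearCombination_apply,
    Finsupp.sum, smul_eq_mul, Matrix.smul_apply, Matrix.vecMulVec_apply, star_trivial,
    Finset.sum_mul]
  exact Finset.sum_congr rfl fun _ _ => by ring

variable {ν : Measure ((Fin n → ℝ) × ℝ)}

lemma localizingMatrix_jointMoment (hint : ∀ d, Integrable (monomialEval d) ν)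
    (q : JointIndex n →₀ ℝ) (k : ℕ) :
    localizingMatrix q k (jointMoment ν) =
      Matrix.of fun a b => ∫ z, localizingMatrix q k (fun d => monomialEval d z) a b ∂ν := by
  ext a b
  simp only [localizingMatrix, Finsupp.linearCombination_apply, Finsupp.sum, smul_eq_mul,
    Matrix.of_apply, jointMoment]
  rw [integral_finsetSum _ fun _ _ => (hint _).const_mul _]
  simp only [integral_const_mul]

lemma posSemidef_localizingMatrix_jointMoment (hint : ∀ d, Integrable (monomialEval d) ν)
    {q : JointIndex n →₀ ℝ} (hq : ∀ᵐ z ∂ν, 0 ≤ jointEval q z) (k : ℕ) :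
    (localizingMatrix q k (jointMoment ν)).PosSemidef := by
  rw [localizingMatrix_jointMoment hint]
  refine posSemidef_integral (fun a b => ?_) ?_
  · simp only [localizingMatrix, Finsupp.linearCombination_apply, Finsupp.sum]
    exact integrable_finsetSum _ fun s _ => (hint (s + a + b)).smul (q s)
  · filter_upwards [hq] with z hz
    rw [localizingMatrix_monomialEval]
    exact (Matrix.posSemidef_vecMulVec_self_star _).smul hz

end Moments

section BoundedSupport

variable {n : ℕ} {γ : ℝ}

lemma monomialEval_nonneg {z : (Fin n → ℝ) × ℝ} (hz : 0 ≤ z) (d : JointIndex n) :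
    0 ≤ monomialEval d z :=
  mul_nonneg (Finset.prod_nonneg fun i _ => pow_nonneg (hz.1 i) _) (pow_nonneg hz.2 _)

lemma monomialEval_le_pow {z : (Fin n → ℝ) × ℝ} (hz : z ∈ Icc 0 1 ×ˢ Icc 0 γ)
    (d : JointIndex n) : monomialEval d z ≤ γ ^ d.2 := by
  have hx : ∏ i, z.1 i ^ d.1 i ≤ 1 := Finset.prod_le_one (fun i _ => pow_nonneg (hz.1.1 i) _)
    fun i _ => pow_le_one₀ (hz.1.1 i) (hz.1.2 i)
  calc monomialEval d z ≤ z.2 ^ d.2 := mul_le_of_le_one_left (pow_nonneg hz.2.1 _) hx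
    _ ≤ γ ^ d.2 := pow_le_pow_left₀ hz.2.1 hz.2.2 _

variable {ν : Measure ((Fin n → ℝ) × ℝ)}

lemma integrable_monomialEval [IsFiniteMeasure ν] (hν : ∀ᵐ z ∂ν, z ∈ Icc 0 1 ×ˢ Icc 0 γ)
    (d : JointIndex n) : Integrable (monomialEval d) ν := by
  refine Integrable.of_bound (by fun_prop) (γ ^ d.2) ?_
  filter_upwards [hν] with z hz
  rw [Real.norm_of_nonneg (monomialEval_nonneg ⟨hz.1.1, hz.2.1⟩ d)]
  exact monomialEval_le_pow hz d

lemma jointMoment_nonneg (hν : ∀ᵐ z ∂ν, 0 ≤ z) (d : JointIndex n) : 0 ≤ jointMoment ν d :=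
  integral_nonneg_of_ae <| by filter_upwards [hν] with z hz using monomialEval_nonneg hz d

lemma jointMoment_le_pow [IsProbabilityMeasure ν] (hν : ∀ᵐ z ∂ν, z ∈ Icc 0 1 ×ˢ Icc 0 γ)
    (d : JointIndex n) : jointMoment ν d ≤ γ ^ d.2 :=
  calc jointMoment ν d ≤ ∫ _, γ ^ d.2 ∂ν :=
        integral_mono_ae (integrable_monomialEval hν d) (integrable_const _) <| by
          filter_upwards [hν] with z hz using monomialEval_le_pow hz d
    _ = γ ^ d.2 := by simp

lemma summable_mul_jointMoment [IsProbabilityMeasure ν]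
    (hν : ∀ᵐ z ∂ν, z ∈ Icc 0 1 ×ˢ Icc 0 γ) (hγ : 0 ≤ γ) {θ : JointIndex n → ℝ}
    (hθ : ∀ d, 0 ≤ θ d) (hsum : Summable fun d => θ d * max 1 γ ^ (d.2 + 1)) :
    Summable fun d => θ d * jointMoment ν d := by
  have hν0 : ∀ᵐ z ∂ν, 0 ≤ z := hν.mono fun z hz => ⟨hz.1.1, hz.2.1⟩
  refine Summable.of_nonneg_of_le (fun d => mul_nonneg (hθ d) (jointMoment_nonneg hν0 d))
    (fun d => mul_le_mul_of_nonneg_left ?_ (hθ d)) hsum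
  calc jointMoment ν d ≤ γ ^ d.2 := jointMoment_le_pow hν d
    _ ≤ max 1 γ ^ d.2 := pow_le_pow_left₀ hγ (le_max_right _ _) _
    _ ≤ max 1 γ ^ (d.2 + 1) := pow_le_pow_right₀ (le_max_left _ _) (Nat.le_succ _)

end BoundedSupport

section Feasible

variable {n m : ℕ} {γ : ℝ} {g : Fin m → (Fin n → ℕ) → ℝ} {t : Fin m → ℕ}
  {μmom : JointIndex n → ℝ} {r : ℕ} {φ ψ : JointIndex n → ℝ}

lemma feasible_iff : Feasible n m γ g t μmom r φ ↔
    (localizingMatrix (Finsupp.single 0 1) r φ).PosSemidef ∧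
    (∀ j, (localizingMatrix (liftPoly (2 * t j) (g j)) (r - t j) φ).PosSemidef) ∧
    (localizingMatrix (rangePoly n γ) (r - 1) φ).PosSemidef ∧
    ∀ d : JointIndex n, d.2 ≤ 1 → totalDegree d ≤ 2 * r → φ d = μmom d := by
  simp only [Feasible, momMat_eq_localizingMatrix, locMatX_eq_localizingMatrix,
    locMatY_eq_localizingMatrix, totalDegree]

lemma feasible_congr (hr : 1 ≤ r) (ht : ∀ j, t j ≤ r) (hφψ : ∀ d ∈ idx n (2 * r), φ d = ψ d) :
    Feasible n m γ g t μmom r φ ↔ Feasible n m γ g t μmom r ψ := by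
  have hlift (j : Fin m) : localizingMatrix (liftPoly (2 * t j) (g j)) (r - t j) φ =
      localizingMatrix (liftPoly (2 * t j) (g j)) (r - t j) ψ :=
    localizingMatrix_congr (by have := ht j; omega) (liftPoly_mem_supported _ _) hφψ
  have hmom (d : JointIndex n) : (totalDegree d ≤ 2 * r → φ d = μmom d) ↔
      (totalDegree d ≤ 2 * r → ψ d = μmom d) :=
    forall_congr' fun hd => by rw [hφψ d (mem_idx.2 hd)]
  simp only [feasible_iff, hlift, hmom,
    localizingMatrix_congr (k := r) (by omega) single_zero_one_mem_supported hφψ,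
    localizingMatrix_congr (k := r - 1) (by omega) (rangePoly_mem_supported γ) hφψ]

lemma isClosed_setOf_feasible : IsClosed {φ | Feasible n m γ g t μmom r φ} := by
  have hloc (q : JointIndex n →₀ ℝ) (k : ℕ) :
      IsClosed {φ | (localizingMatrix q k φ).PosSemidef} :=
    isClosed_setOf_posSemidef.preimage (continuous_localizingMatrix q k)
  simp only [feasible_iff, ofPred_and, ofPred_forall]
  exact (hloc _ _).inter <| (isClosed_iInter fun j => hloc _ _).inter <| (hloc _ _).inter <|
    isClosed_iInter fun d => isClosed_iInter fun _ => isClosed_iInter fun _ =>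
      isClosed_eq (continuous_apply d) continuous_const

lemma feasible_jointMoment {ν : Measure ((Fin n → ℝ) × ℝ)}
    (hint : ∀ d, Integrable (monomialEval d) ν)
    (hx : ∀ j, ∀ᵐ z ∂ν, 0 ≤ polyEval n (2 * t j) (g j) z.1) (hy : ∀ᵐ z ∂ν, z.2 ∈ Icc 0 γ) :
    Feasible n m γ g t (jointMoment ν) r (jointMoment ν) := by
  refine feasible_iff.2 ⟨?_, fun j => ?_, ?_, fun _ _ _ => rfl⟩ <;>
    refine posSemidef_localizingMatrix_jointMoment hint ?_ _
  · exact .of_forall fun z => by rw [jointEval_single_zero_one]; exact zero_le_one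
  · simpa only [jointEval_liftPoly] using hx j
  · filter_upwards [hy] with z hz
    rw [jointEval_rangePoly]
    exact mul_nonneg hz.1 (sub_nonneg.2 hz.2)

/-- The off-diagonal entry `φ_{2a+e_y}` is eliminated between the quadratic form of `M_r(φ)` at
`γ e_a − e_{a+e_y}` and the diagonal entry at `a` of the localizing matrix of `y(γ − y)`. -/
lemma feasible_diag_succ_le (hφ : Feasible n m γ g t μmom r φ) {a : Fin n → ℕ} {k : ℕ}
    (hak : totalDegree (a, k + 1) ≤ r) :
    φ ((a, k + 1) + (a, k + 1)) ≤ γ ^ 2 * φ ((a, k) + (a, k)) := by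
  obtain ⟨hM, -, hY, -⟩ := hφ
  simp only [totalDegree] at hak
  have hquad := quadratic_nonneg_of_posSemidef hM
    ⟨(a, k), mem_idx.2 (by simp only [totalDegree]; omega)⟩ ⟨(a, k + 1), mem_idx.2 hak⟩ γ (-1)
  have hdiag := hY.diag_nonneg
    (i := ⟨(a, k), mem_idx.2 (by simp only [totalDegree]; omega)⟩)
  simp only [momMat, locMatY, Prod.mk_add_mk, Pi.add_def] at hquad hdiag ⊢
  rw [← add_assoc k k 1] at hquad
  rw [show k + 1 + (k + 1) = k + k + 2 by omega] at hquad ⊢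
  linarith

lemma feasible_diag_le (hφ : Feasible n m γ g t μmom r φ) (a : Fin n → ℕ) (k : ℕ)
    (hak : totalDegree (a, k) ≤ r) :
    φ ((a, k) + (a, k)) ≤ (γ ^ 2) ^ k * μmom ((a, 0) + (a, 0)) := by
  induction k with
  | zero =>
    obtain ⟨-, -, -, hμ⟩ := feasible_iff.1 hφ
    rw [pow_zero, one_mul, hμ _ (by simp) (by rw [totalDegree_add]; omega)]
  | succ k ih =>
    have hk : totalDegree (a, k) ≤ r := by simp only [totalDegree] at hak ⊢; omega
    calc φ ((a, k + 1) + (a, k + 1)) ≤ γ ^ 2 * φ ((a, k) + (a, k)) := feasible_diag_succ_le hφ hak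
      _ ≤ γ ^ 2 * ((γ ^ 2) ^ k * μmom ((a, 0) + (a, 0))) :=
        mul_le_mul_of_nonneg_left (ih hk) (sq_nonneg γ)
      _ = (γ ^ 2) ^ (k + 1) * μmom ((a, 0) + (a, 0)) := by ring

lemma exists_abs_le_of_feasible {d : JointIndex n} (hd : d ∈ idx n (2 * r)) :
    ∃ C, ∀ φ, Feasible n m γ g t μmom r φ → |φ d| ≤ C := by
  obtain ⟨a, ha, b, hb, rfl⟩ := exists_add_eq_mem_idx hd
  let B (c : JointIndex n) : ℝ := (γ ^ 2) ^ c.2 * μmom ((c.1, 0) + (c.1, 0))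
  refine ⟨(B a + B b) / 2, fun φ hφ => ?_⟩
  calc |φ (a + b)| ≤ (φ (a + a) + φ (b + b)) / 2 := abs_apply_le_of_posSemidef hφ.1 ⟨a, ha⟩ ⟨b, hb⟩
    _ ≤ (B a + B b) / 2 := by
      have := feasible_diag_le hφ a.1 a.2 (mem_idx.1 ha)
      have := feasible_diag_le hφ b.1 b.2 (mem_idx.1 hb)
      linarith

lemma isCompact_setOf_feasible_and_support_subset :
    IsCompact {φ | Feasible n m γ g t μmom r φ ∧ ∀ d ∉ idx n (2 * r), φ d = 0} := by
  have hbound (d : JointIndex n) : ∃ C, ∀ φ : JointIndex n → ℝ,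
      Feasible n m γ g t μmom r φ ∧ (∀ d ∉ idx n (2 * r), φ d = 0) → |φ d| ≤ C := by
    by_cases hd : d ∈ idx n (2 * r)
    · obtain ⟨C, hC⟩ := exists_abs_le_of_feasible (γ := γ) (g := g) (t := t) (μmom := μmom) hd
      exact ⟨C, fun φ hφ => hC φ hφ.1⟩
    · exact ⟨0, fun φ hφ => by rw [hφ.2 d hd, abs_zero]⟩
  choose C hC using hbound
  refine (isCompact_univ_pi fun d => isCompact_Icc (a := -C d) (b := C d)).of_isClosed_subset
    ?_ fun φ hφ d _ => abs_le.1 (hC d φ hφ)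
  simp only [ofPred_and, ofPred_forall]
  exact isClosed_setOf_feasible.inter <| isClosed_iInter fun d => isClosed_iInter fun _ =>
    isClosed_eq (continuous_apply d) continuous_const

theorem exists_feasible_forall_sum_le (hr : 1 ≤ r) (ht : ∀ j, t j ≤ r)
    (hφ : Feasible n m γ g t μmom r φ) (θ : JointIndex n → ℝ) :
    ∃ φr, Feasible n m γ g t μmom r φr ∧ ∀ ψ, Feasible n m γ g t μmom r ψ →
      ∑ d ∈ idx n (2 * r), θ d * φr d ≤ ∑ d ∈ idx n (2 * r), θ d * ψ d := by
  let K := {φ | Feasible n m γ g t μmom r φ ∧ ∀ d ∉ idx n (2 * r), φ d = 0}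
  let trunc (ψ : JointIndex n → ℝ) : JointIndex n → ℝ := (idx n (2 * r) : Set _).indicator ψ
  have htrunc (ψ) (d) (hd : d ∈ idx n (2 * r)) : ψ d = trunc ψ d :=
    (indicator_of_mem (Finset.mem_coe.2 hd) ψ).symm
  have htruncK (ψ) (hψ : Feasible n m γ g t μmom r ψ) : trunc ψ ∈ K :=
    ⟨(feasible_congr hr ht (htrunc ψ)).1 hψ, fun d hd => indicator_of_notMem (by simpa using hd) ψ⟩
  have hobj : Continuous fun ψ : JointIndex n → ℝ => ∑ d ∈ idx n (2 * r), θ d * ψ d := by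
    fun_prop
  obtain ⟨φr, hφr, hmin⟩ := isCompact_setOf_feasible_and_support_subset.exists_isMinOn
    ⟨_, htruncK φ hφ⟩ hobj.continuousOn
  refine ⟨φr, hφr.1, fun ψ hψ => ?_⟩
  calc ∑ d ∈ idx n (2 * r), θ d * φr d ≤ ∑ d ∈ idx n (2 * r), θ d * trunc ψ d :=
        hmin (htruncK ψ hψ)
    _ = ∑ d ∈ idx n (2 * r), θ d * ψ d := Finset.sum_congr rfl fun d hd => by rw [htrunc ψ d hd]

end Feasible

theorem weighted_sdp_attained_and_bounded_general {n m : ℕ} {γ : ℝ}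
    {g : Fin m → (Fin n → ℕ) → ℝ} {t : Fin m → ℕ} {ν : Measure ((Fin n → ℝ) × ℝ)}
    (hint : ∀ d, Integrable (monomialEval d) ν)
    (hx : ∀ j, ∀ᵐ z ∂ν, 0 ≤ polyEval n (2 * t j) (g j) z.1) (hy : ∀ᵐ z ∂ν, z.2 ∈ Icc 0 γ)
    {θ : JointIndex n → ℝ} (hθ : ∀ d, 0 ≤ θ d * jointMoment ν d)
    (hsum : Summable fun d => θ d * jointMoment ν d)
    {r : ℕ} (hr : 1 ≤ r) (ht : ∀ j, t j ≤ r) :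
    ∃ φr, Feasible n m γ g t (jointMoment ν) r φr ∧
      (∀ φ, Feasible n m γ g t (jointMoment ν) r φ →
        ∑ d ∈ idx n (2 * r), θ d * φr d ≤ ∑ d ∈ idx n (2 * r), θ d * φ d) ∧
      ∑ d ∈ idx n (2 * r), θ d * φr d ≤ ∑' d, θ d * jointMoment ν d := by
  have hfeas : Feasible n m γ g t (jointMoment ν) r (jointMoment ν) :=
    feasible_jointMoment hint hx hy
  obtain ⟨φr, hφr, hmin⟩ := exists_feasible_forall_sum_le hr ht hfeas θ
  exact ⟨φr, hφr, hmin, (hmin _ hfeas).trans (hsum.sum_le_tsum _ fun d _ => hθ d)⟩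

section GraphMeasure

/-- The law `δ_{f(x)}(dy) λ(dx)` on `ℝ^n × ℝ` of a measurable function `f` under `λ`. -/
def graphMeasure {n : ℕ} (lam : Measure (Fin n → ℝ)) (f : (Fin n → ℝ) → ℝ) :
    Measure ((Fin n → ℝ) × ℝ) :=
  lam.map fun x => (x, f x)

variable {n : ℕ} {lam : Measure (Fin n → ℝ)} {f : (Fin n → ℝ) → ℝ}

lemma ae_mem_prod_graphMeasure (hf : Measurable f) {X : Set (Fin n → ℝ)} {Y : Set ℝ}
    (hX : MeasurableSet X) (hY : MeasurableSet Y) (hlam : lam Xᶜ = 0) (hfY : ∀ x ∈ X, f x ∈ Y) :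
    ∀ᵐ z ∂graphMeasure lam f, z ∈ X ×ˢ Y := by
  have hae : ∀ᵐ x ∂lam, x ∈ X := by rwa [ae_iff]
  refine (ae_map_iff (by fun_prop) (hX.prod hY)).2 ?_
  filter_upwards [hae] with x hx using ⟨hx, hfY x hx⟩

lemma jointMoment_graphMeasure (hf : Measurable f) (d : JointIndex n) :
    jointMoment (graphMeasure lam f) d = ∫ x, (∏ i, x i ^ d.1 i) * f x ^ d.2 ∂lam :=
  integral_map (by fun_prop) (by fun_prop)

end GraphMeasure

/-- For nonnegative summable weights `θ` (with
`Σ_d θ_d max(1,γ)^{d_y+1} < ∞`) and each admissible `r`, the order-`r` relaxation with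
weighted objective `Σ_{|d| ≤ 2r} θ_d φ_d` attains its infimum at some feasible `φ^r`,
and its value is at most `𝒯(μ) = Σ_d θ_d μ_d`. -/
theorem weighted_sdp_attained_and_bounded
    (n m : ℕ) (hn : 1 ≤ n) (hm : 1 ≤ m)
    (γ : ℝ) (hγ : 0 < γ)
    (g : Fin m → (Fin n → ℕ) → ℝ) (t : Fin m → ℕ)
    (hgdeg : ∀ j e, 2 * t j < ∑ i, e i → g j e = 0)
    (hg1t : t ⟨0, hm⟩ = 1)
    (hg1 : ∀ x : Fin n → ℝ,
      polyEval n (2 * t ⟨0, hm⟩) (g ⟨0, hm⟩) x = (n : ℝ) - ∑ i, x i ^ 2)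
    (X : Set (Fin n → ℝ))
    (hXdef : X = {x | ∀ j, 0 ≤ polyEval n (2 * t j) (g j) x})
    (hXsub : X ⊆ Icc 0 1) (hXc : IsCompact X)
    (lam : Measure (Fin n → ℝ)) [IsProbabilityMeasure lam] (hlam : lam Xᶜ = 0)
    (f : (Fin n → ℝ) → ℝ) (hf : Measurable f) (hfY : ∀ x ∈ X, f x ∈ Icc 0 γ)
    (μmom : ((Fin n → ℕ) × ℕ) → ℝ)
    (hμmom : ∀ d : (Fin n → ℕ) × ℕ,
      μmom d = ∫ x, (∏ i, x i ^ d.1 i) * f x ^ d.2 ∂lam)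
    (θ : ((Fin n → ℕ) × ℕ) → ℝ) (hθ : ∀ d, 0 ≤ θ d)
    (hθsum : Summable fun d : (Fin n → ℕ) × ℕ => θ d * max 1 γ ^ (d.2 + 1)) :
    ∀ r : ℕ, 1 ≤ r → (∀ j, t j ≤ r) →
      ∃ φr : ((Fin n → ℕ) × ℕ) → ℝ, Feasible n m γ g t μmom r φr ∧
        (∀ φ : ((Fin n → ℕ) × ℕ) → ℝ, Feasible n m γ g t μmom r φ →
          ∑ d ∈ idx n (2 * r), θ d * φr d ≤ ∑ d ∈ idx n (2 * r), θ d * φ d) ∧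
        ∑ d ∈ idx n (2 * r), θ d * φr d ≤ ∑' d : (Fin n → ℕ) × ℕ, θ d * μmom d := by
  intro r hr ht
  obtain rfl : μmom = jointMoment (graphMeasure lam f) :=
    funext fun d => (hμmom d).trans (jointMoment_graphMeasure hf d).symm
  have : IsProbabilityMeasure (graphMeasure lam f) :=
    Measure.isProbabilityMeasure_map (by fun_prop)
  have hXY : ∀ᵐ z ∂graphMeasure lam f, z ∈ X ×ˢ Icc 0 γ :=
    ae_mem_prod_graphMeasure hf hXc.measurableSet measurableSet_Icc hlam hfY
  have hbox : ∀ᵐ z ∂graphMeasure lam f, z ∈ Icc 0 1 ×ˢ Icc 0 γ :=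
    hXY.mono fun z hz => ⟨hXsub hz.1, hz.2⟩
  have hXnonneg : ∀ x ∈ X, ∀ j, 0 ≤ polyEval n (2 * t j) (g j) x :=
    fun x hx => by rwa [hXdef] at hx
  exact weighted_sdp_attained_and_bounded_general (integrable_monomialEval hbox)
    (fun j => hXY.mono fun z hz => hXnonneg z.1 hz.1 j) (hXY.mono fun z hz => hz.2)
    (fun d => mul_nonneg (hθ d) (jointMoment_nonneg (hbox.mono fun z hz => ⟨hz.1.1, hz.2.1⟩) d))
    (summable_mul_jointMoment hbox hγ.le hθ hθsum) hr ht
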